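/- Let 0 < q ≤ 1 and k ≥ 1. For every integer r with 1 ≤ r ≤ k, if y_n = q^{rn} [n choose k−r]_q for n ≥ 0, then (Δ_{q,k} y)_n = 0 for all n ≥ k. -/

import Mathlib

/-- `[n]_q = 1 + q + ⋯ + q^{n-1}`. -/
noncomputable def qnum (q : ℝ) (n : ℕ) : ℝ := ∑ i ∈ Finset.range n, q ^ i

/-- `[n]_q! = [1]_q [2]_q ⋯ [n]_q`. -/
noncomputable def qfact (q : ℝ) (n : ℕ) : ℝ := ∏ i ∈ Finset.range n, qnum q (i + 1)

/-- q-binomial coefficient `[n choose k]_q`, with the convention that it is `0` for `k > n`. -/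
noncomputable def qbinom (q : ℝ) (n k : ℕ) : ℝ :=
  if k ≤ n then qfact q n / (qfact q (n - k) * qfact q k) else 0

/-- `(Δ_{q,k} y)_n = ∑_{j=0}^k (-1)^j [k choose j]_q q^{j(j+1)/2} y_{n-j}`. -/
noncomputable def deltaOp (q : ℝ) (k : ℕ) (y : ℕ → ℝ) (n : ℕ) : ℝ :=
  ∑ j ∈ Finset.range (k + 1), (-1 : ℝ) ^ j * qbinom q k j * q ^ (j * (j + 1) / 2) * y (n - j)

theorem qnum_pos' {q : ℝ} (hq : 0 < q) (n : ℕ) : 0 < qnum q (n + 1) := by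
  unfold qnum
  exact Finset.sum_pos (fun i _ => pow_pos hq i) ⟨0, by simp⟩

theorem qfact_pos' {q : ℝ} (hq : 0 < q) (n : ℕ) : 0 < qfact q n := by
  unfold qfact
  exact Finset.prod_pos (fun i _ => qnum_pos' hq i)

theorem qfact_succ' (q : ℝ) (n : ℕ) : qfact q (n + 1) = qfact q n * qnum q (n + 1) := by
  unfold qfact
  rw [Finset.prod_range_succ]

theorem qnum_add' (q : ℝ) (a b : ℕ) : qnum q (a + b) = qnum q a + q ^ a * qnum q b := by
  unfold qnum
  rw [Finset.sum_range_add, Finset.mul_sum]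
  simp only [pow_add]

theorem qbinom_zero' {q : ℝ} (hq : 0 < q) (n : ℕ) : qbinom q n 0 = 1 := by
  have := (qfact_pos' hq n).ne'
  simp [qbinom, qfact] at *
  exact this

theorem qbinom_self' {q : ℝ} (hq : 0 < q) (n : ℕ) : qbinom q n n = 1 := by
  have := (qfact_pos' hq n).ne'
  simp [qbinom, qfact] at *
  exact this

theorem qbinom_gt' (q : ℝ) {n k : ℕ} (h : n < k) : qbinom q n k = 0 := by
  simp [qbinom, h]

theorem qbinom_add' (q : ℝ) (a b : ℕ) :
    qbinom q (a + b) b = qfact q (a + b) / (qfact q a * qfact q b) := by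
  simp [qbinom]

theorem pascalA {q : ℝ} (hq : 0 < q) (n j : ℕ) :
    qbinom q (n + 1) (j + 1) = qbinom q n (j + 1) + q ^ (n - j) * qbinom q n j := by
  rcases lt_trichotomy n j with h | h | h
  · rw [qbinom_gt' q (by omega), qbinom_gt' q (by omega), qbinom_gt' q h]; simp
  · subst h
    rw [qbinom_self' hq, qbinom_self' hq, qbinom_gt' q (by omega)]; simp
  · obtain ⟨t, rfl⟩ : ∃ t, n = t + (j + 1) := ⟨n - (j + 1), by omega⟩
    have e1 : qbinom q (t + (j + 1) + 1) (j + 1) =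
        qfact q (t + 1 + (j + 1)) / (qfact q (t + 1) * qfact q (j + 1)) := by
      rw [show t + (j + 1) + 1 = (t + 1) + (j + 1) by omega]
      exact qbinom_add' q (t + 1) (j + 1)
    have e2 : qbinom q (t + (j + 1)) j =
        qfact q (t + 1 + j) / (qfact q (t + 1) * qfact q j) := by
      rw [show t + (j + 1) = (t + 1) + j by omega]
      exact qbinom_add' q (t + 1) j
    rw [e1, e2, qbinom_add', show t + (j + 1) - j = t + 1 by omega,
      show t + 1 + (j + 1) = (t + 1 + j) + 1 by omega, show t + (j + 1) = t + 1 + j by omega,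
      qfact_succ' q (t + 1 + j), qfact_succ' q t, qfact_succ' q j,
      show t + 1 + j + 1 = (t + 1) + (j + 1) by omega, qnum_add' q (t + 1) (j + 1)]
    have h1 := (qfact_pos' hq t).ne'
    have h2 := (qfact_pos' hq j).ne'
    have h3 := (qnum_pos' hq t).ne'
    have h4 := (qnum_pos' hq j).ne'
    field_simp

theorem pascalB {q : ℝ} (hq : 0 < q) (n j : ℕ) :
    qbinom q (n + 1) (j + 1) = qbinom q n j + q ^ (j + 1) * qbinom q n (j + 1) := by
  rcases lt_trichotomy n j with h | h | h
  · rw [qbinom_gt' q (by omega), qbinom_gt' q (by omega), qbinom_gt' q (by omega)]; simp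
  · subst h
    rw [qbinom_self' hq, qbinom_self' hq, qbinom_gt' q (by omega)]; simp
  · obtain ⟨t, rfl⟩ : ∃ t, n = t + (j + 1) := ⟨n - (j + 1), by omega⟩
    have e1 : qbinom q (t + (j + 1) + 1) (j + 1) =
        qfact q (t + 1 + (j + 1)) / (qfact q (t + 1) * qfact q (j + 1)) := by
      rw [show t + (j + 1) + 1 = (t + 1) + (j + 1) by omega]
      exact qbinom_add' q (t + 1) (j + 1)
    have e2 : qbinom q (t + (j + 1)) j =
        qfact q (t + 1 + j) / (qfact q (t + 1) * qfact q j) := by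
      rw [show t + (j + 1) = (t + 1) + j by omega]
      exact qbinom_add' q (t + 1) j
    rw [e1, e2, qbinom_add',
      show t + 1 + (j + 1) = (t + 1 + j) + 1 by omega, show t + (j + 1) = t + 1 + j by omega,
      qfact_succ' q (t + 1 + j), qfact_succ' q t, qfact_succ' q j,
      show t + 1 + j + 1 = (j + 1) + (t + 1) by omega, qnum_add' q (j + 1) (t + 1)]
    have h1 := (qfact_pos' hq t).ne'
    have h2 := (qfact_pos' hq j).ne'
    have h3 := (qnum_pos' hq t).ne'
    have h4 := (qnum_pos' hq j).ne'
    field_simp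

theorem coeff_rec {q : ℝ} (hq : 0 < q) (k j : ℕ) (hj : j ≤ k) :
    (-1 : ℝ) ^ (j + 1) * qbinom q (k + 1) (j + 1) * q ^ ((j + 1) * (j + 1 + 1) / 2)
    = (-1 : ℝ) ^ (j + 1) * qbinom q k (j + 1) * q ^ ((j + 1) * (j + 1 + 1) / 2)
      - q ^ (k + 1) * ((-1 : ℝ) ^ j * qbinom q k j * q ^ (j * (j + 1) / 2)) := by
  have e : (j + 1) * (j + 1 + 1) / 2 = j * (j + 1) / 2 + (j + 1) := by
    rw [show (j + 1) * (j + 1 + 1) = j * (j + 1) + (j + 1) * 2 by ring]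
    exact Nat.add_mul_div_right _ _ (by norm_num)
  rw [pascalA hq, e, show k + 1 = (k - j) + (j + 1) by omega]
  ring

theorem delta_succ {q : ℝ} (hq : 0 < q) (k : ℕ) (y : ℕ → ℝ) (m : ℕ) :
    deltaOp q (k + 1) y (m + 1) = deltaOp q k y (m + 1) - q ^ (k + 1) * deltaOp q k y m := by
  have h : deltaOp q k y (m + 1) = ∑ j ∈ Finset.range (k + 1 + 1),
      (-1 : ℝ) ^ j * qbinom q k j * q ^ (j * (j + 1) / 2) * y (m + 1 - j) := by
    rw [Finset.sum_range_succ, qbinom_gt' q (Nat.lt_succ_self k)]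
    simp [deltaOp]
  rw [h, Finset.sum_range_succ']
  unfold deltaOp
  rw [Finset.sum_range_succ', qbinom_zero' hq, qbinom_zero' hq, Finset.mul_sum,
    add_sub_right_comm, ← Finset.sum_sub_distrib]
  congr 1
  apply Finset.sum_congr rfl
  intro j hj
  rw [coeff_rec hq k j (by simp at hj; omega), Nat.add_sub_add_right]
  ring

theorem delta_succ' {q : ℝ} (hq : 0 < q) (k : ℕ) (y z : ℕ → ℝ) (c : ℝ) (m : ℕ) (hm : k ≤ m)
    (hz : ∀ i, y (i + 1) - q ^ (k + 1) * y i = c * z i) :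
    deltaOp q (k + 1) y (m + 1) = c * deltaOp q k z m := by
  rw [delta_succ hq]
  unfold deltaOp
  rw [Finset.mul_sum, Finset.mul_sum, ← Finset.sum_sub_distrib]
  apply Finset.sum_congr rfl
  intro j hj
  have h1 : m + 1 - j = m - j + 1 := by simp at hj; omega
  rw [h1]
  linear_combination ((-1 : ℝ) ^ j * qbinom q k j * q ^ (j * (j + 1) / 2)) * hz (m - j)

theorem main_aux {q : ℝ} (hq : 0 < q) (r : ℕ) (hr : 1 ≤ r) (s : ℕ) :
    ∀ n, s + r ≤ n → deltaOp q (s + r) (fun m => q ^ (r * m) * qbinom q m s) n = 0 := by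
  induction s with
  | zero =>
    intro n hn
    obtain ⟨p, rfl⟩ : ∃ p, r = p + 1 := ⟨r - 1, by omega⟩
    obtain ⟨m, rfl⟩ : ∃ m, n = m + 1 := ⟨n - 1, by omega⟩
    rw [Nat.zero_add, delta_succ' hq p _ (fun _ => 0) 0 m (by omega)]
    · simp
    · intro i
      simp only [qbinom_zero' hq]
      ring
  | succ s ih =>
    intro n hn
    obtain ⟨m, rfl⟩ : ∃ m, n = m + 1 := ⟨n - 1, by omega⟩
    rw [show s + 1 + r = (s + r) + 1 by omega,
      delta_succ' hq (s + r) _ (fun m => q ^ (r * m) * qbinom q m s) (q ^ r) m (by omega),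
      ih m (by omega), mul_zero]
    intro i
    simp only [pascalB hq]
    ring

/-- for `0 < q ≤ 1`, `k ≥ 1` and `1 ≤ r ≤ k`, if `y_n = q^{rn} [n choose k-r]_q`
then `(Δ_{q,k} y)_n = 0` for all `n ≥ k`. -/
theorem stmt7 (q : ℝ) (hq0 : 0 < q) (hq1 : q ≤ 1) (k : ℕ) (hk : 1 ≤ k) :
    ∀ r : ℕ, 1 ≤ r → r ≤ k →
      ∀ n : ℕ, k ≤ n → deltaOp q k (fun m => q ^ (r * m) * qbinom q m (k - r)) n = 0 := by
  intro r hr hrk n hn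
  have h := main_aux hq0 r hr (k - r) n (by omega)
  rwa [Nat.sub_add_cancel hrk] at h
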